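/- For every integer m ≥ 4, the number of nonzero elements β of the finite field F_{2^m} with f^cyc_m(β) = 0 is at most (2^m+1)/3 if m is odd, and at most (2^m-1)/3 if m is even. -/

import Mathlib

/-!
Put `A x = !![1, x; 1, 0]` and `P = A (β ^ 2 ^ (m - 1)) * ⋯ * A (β ^ 2) * A β`. For `m ≥ 1` the
closed walks counted by `tr P` spell the `m`-bit strings without cyclically consecutive ones, so
`tr P = 1 + f^cyc_m(β)`, while `det P = β ^ (2 ^ m - 1) = 1` for `β ≠ 0` in `F_{2^m}`.
If `β = u ^ 3 + u`, then `u ^ 4 = u ^ 2 + β u` says that `A β` sends `(u ^ 2, u)` to its Frobenius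
conjugate; hence `P` fixes this vector, `tr P = 1 + det P = 0`, and `f^cyc_m(β) = 1`.
So every nonzero root lies outside the image of `u ↦ u ^ 3 + u`.

The complement of that image is bounded by a second moment: no fibre over `β ≠ 0` has exactly two
elements, since `u + v` joins `u ≠ v`, so `(c - 1) (c - 3) ≥ 0` for each such fibre size `c`.
Pairs `u ≠ v` in a common fibre satisfy `u ^ 2 + u v + v ^ 2 = 1` and are determined by the ratio
`t = u / (u - v)`, which avoids the roots of `t ^ 2 + t + 1`; for even `m` there are two such roots.
-/

open Polynomial

/-- `fibSet m` is the set of fibbinary integers below `2^m`: integers in `{0,…,2^m-1}`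
whose binary representation has no two consecutive ones. -/
noncomputable def fibSet (m : ℕ) : Finset ℕ :=
  @Finset.filter _ (fun i => ∀ j : ℕ, ¬(i.testBit j ∧ i.testBit (j + 1)))
    (Classical.decPred _) (Finset.range (2 ^ m))

/-- `fibCycSet m` is the set of integers in `{1,…,2^m-2}` whose `m`-bit binary
representation has no two cyclically consecutive ones. -/
def fibCycSet (m : ℕ) : Finset ℕ :=
  (Finset.Icc 1 (2 ^ m - 2)).filter
    (fun i => ∀ j < m, ¬(i.testBit j ∧ i.testBit ((j + 1) % m)))

/-- The `m`-th fibbinary polynomial over `F_2`. -/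
noncomputable def fibPoly (m : ℕ) : Polynomial (ZMod 2) :=
  ∑ i ∈ fibSet m, X ^ i

/-- The `m`-th cyclic fibbinary polynomial over `F_2`. -/
noncomputable def fibCycPoly (m : ℕ) : Polynomial (ZMod 2) :=
  ∑ i ∈ fibCycSet m, X ^ i

open Finset Matrix

section Fibbinary

theorem mem_fibSet {n i : ℕ} :
    i ∈ fibSet n ↔ i < 2 ^ n ∧ ∀ j, ¬(i.testBit j ∧ i.testBit (j + 1)) := by
  simp only [fibSet, mem_filter, mem_range]

theorem testBit_eq_false_iff_lt_two_pow {n i : ℕ} (hi : i < 2 ^ (n + 1)) :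
    i.testBit n = false ↔ i < 2 ^ n := by
  refine ⟨fun h ↦ ?_, Nat.testBit_lt_two_pow⟩
  by_contra! hle
  simp [Nat.testBit_of_two_pow_le_and_two_pow_add_one_gt hle hi] at h

theorem fibSet_zero : fibSet 0 = {0} := by
  ext i
  simp +contextual [mem_fibSet]

theorem fibSet_one : fibSet 1 = {0, 1} := by
  ext i
  suffices i < 2 → ∀ j, i.testBit j → i.testBit (j + 1) = false by
    simpa [mem_fibSet, Nat.lt_succ_iff, Nat.le_one_iff_eq_zero_or_eq_one] using this
  intro hi j _
  rw [Nat.testBit_succ, Nat.div_eq_of_lt hi, Nat.zero_testBit]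

theorem two_pow_add_mem_fibSet {n i : ℕ} (hi : i < 2 ^ (n + 1)) :
    2 ^ (n + 1) + i ∈ fibSet (n + 2) ↔ i ∈ fibSet n := by
  have hbit (j : ℕ) : (2 ^ (n + 1) + i).testBit j = (decide (n + 1 = j) || i.testBit j) := by
    simpa [Nat.testBit_or, Nat.testBit_two_pow] using
      congrArg (Nat.testBit · j) (Nat.two_pow_add_eq_or_of_lt hi 1)
  have hlt : 2 ^ (n + 1) + i < 2 ^ (n + 2) := by rw [pow_succ 2 (n + 1)]; omega
  simp only [mem_fibSet, hbit, hlt, true_and]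
  constructor
  · intro h
    refine ⟨(testBit_eq_false_iff_lt_two_pow hi).1 ?_, fun j hj ↦ h j ?_⟩
    · simpa using h n
    · simp [hj.1, hj.2]
  · rintro ⟨hi', h⟩ j hj
    have hhigh {k : ℕ} (hk : n ≤ k) : i.testBit k = false :=
      Nat.testBit_lt_two_pow (hi'.trans_le (Nat.pow_le_pow_right two_pos hk))
    have := h j
    grind

theorem fibSet_add_two (n : ℕ) :
    fibSet (n + 2) = fibSet (n + 1) ∪ (fibSet n).map (addLeftEmbedding (2 ^ (n + 1))) := by
  ext i
  simp only [mem_union, mem_map, addLeftEmbedding_apply]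
  constructor
  · intro hi
    obtain hlt | hge := lt_or_ge i (2 ^ (n + 1))
    · exact .inl (mem_fibSet.2 ⟨hlt, (mem_fibSet.1 hi).2⟩)
    · obtain ⟨k, rfl⟩ := Nat.exists_eq_add_of_le hge
      have hk : k < 2 ^ (n + 1) := by have := pow_succ 2 (n + 1) ▸ (mem_fibSet.1 hi).1; omega
      exact .inr ⟨k, (two_pow_add_mem_fibSet hk).1 hi, rfl⟩
  · rintro (hi | ⟨k, hk, rfl⟩)
    · obtain ⟨hlt, h⟩ := mem_fibSet.1 hi
      exact mem_fibSet.2 ⟨hlt.trans (Nat.pow_lt_pow_succ one_lt_two), h⟩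
    · have hlt := (mem_fibSet.1 hk).1
      exact (two_pow_add_mem_fibSet (by omega)).2 hk

theorem sum_fibSet_add_two {M : Type*} [AddCommMonoid M] (f : ℕ → M) (n : ℕ) :
    ∑ i ∈ fibSet (n + 2), f i =
      ∑ i ∈ fibSet (n + 1), f i + ∑ i ∈ fibSet n, f (2 ^ (n + 1) + i) := by
  have hdisj : Disjoint (fibSet (n + 1)) ((fibSet n).map (addLeftEmbedding (2 ^ (n + 1)))) := by
    simp only [disjoint_left, mem_map, addLeftEmbedding_apply, not_exists, not_and]
    rintro _ hi k - rfl
    have := (mem_fibSet.1 hi).1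
    omega
  rw [fibSet_add_two, sum_union hdisj, sum_map]
  simp only [addLeftEmbedding_apply]

theorem forall_lt_not_testBit_add_one_mod_iff {n i : ℕ} (hi : i < 2 ^ (n + 1)) :
    (∀ j < n + 1, ¬(i.testBit j ∧ i.testBit ((j + 1) % (n + 1)))) ↔
      i ∈ fibSet (n + 1) ∧ ¬(i.testBit n ∧ i.testBit 0) := by
  have hmod : (∀ j < n, ¬(i.testBit j ∧ i.testBit ((j + 1) % (n + 1)))) ↔
      ∀ j, ¬(i.testBit j ∧ i.testBit (j + 1)) := by
    refine ⟨fun h j ↦ ?_, fun h j hj ↦ ?_⟩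
    · obtain hj | hj := lt_or_ge j n
      · simpa only [Nat.mod_eq_of_lt (Nat.succ_lt_succ hj)] using h j hj
      · have hpow : 2 ^ (n + 1) ≤ 2 ^ (j + 1) := Nat.pow_le_pow_right two_pos (by omega)
        simp [Nat.testBit_lt_two_pow (hi.trans_le hpow)]
    · simpa only [Nat.mod_eq_of_lt (Nat.succ_lt_succ hj)] using h j
  rw [Nat.forall_lt_succ_right, hmod, Nat.mod_self, mem_fibSet]
  simp only [hi, true_and]

theorem mem_insert_zero_fibCycSet {n i : ℕ} :
    i ∈ insert 0 (fibCycSet (n + 1)) ↔ i ∈ fibSet (n + 1) ∧ ¬(i.testBit n ∧ i.testBit 0) := by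
  have htwo : 2 ≤ 2 ^ (n + 1) := Nat.le_self_pow n.succ_ne_zero 2
  simp only [fibCycSet, mem_insert, mem_filter, mem_Icc]
  constructor
  · rintro (rfl | ⟨⟨-, hle⟩, h⟩)
    · simp [mem_fibSet]
    · exact (forall_lt_not_testBit_add_one_mod_iff (by omega)).1 h
  · intro h
    have hlt := (mem_fibSet.1 h.1).1
    have hne : i ≠ 2 ^ (n + 1) - 1 := by
      rintro rfl
      simpa [Nat.testBit_two_pow_sub_one] using h.2
    rw [or_iff_not_imp_left]
    exact fun h0 ↦ ⟨by omega, (forall_lt_not_testBit_add_one_mod_iff hlt).2 h⟩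

theorem insert_zero_fibCycSet (n : ℕ) :
    insert 0 (fibCycSet (n + 1)) = {i ∈ fibSet (n + 1) | Even i} ∪ {i ∈ fibSet n | ¬Even i} := by
  ext i
  rw [mem_insert_zero_fibCycSet]
  simp only [mem_union, mem_filter, Nat.even_iff, Nat.testBit_zero, mem_fibSet]
  by_cases hi : i < 2 ^ (n + 1)
  · have := testBit_eq_false_iff_lt_two_pow hi
    grind
  · grind

end Fibbinary

section TransferMatrix

variable {R : Type*}

/-- The product `A (β ^ 2 ^ (n - 1)) * ⋯ * A (β ^ 2) * A β` of transfer matrices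
`A x = !![1, x; 1, 0]` for the sums of `β ^ i` over fibbinary `i < 2 ^ n`. Read as walks from the
highest bit down: in state `0` the next bit may be set, in state `1` it must be clear. -/
def fibTransfer [Semiring R] (β : R) : ℕ → Matrix (Fin 2) (Fin 2) R
  | 0 => 1
  | n + 1 => !![1, β ^ 2 ^ n; 1, 0] * fibTransfer β n

theorem fibTransfer_succ_eq [CommSemiring R] (β : R) (n : ℕ) :
    fibTransfer β (n + 1) =
      !![∑ i ∈ fibSet (n + 1) with Even i, β ^ i, ∑ i ∈ fibSet (n + 1) with ¬Even i, β ^ i;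
        ∑ i ∈ fibSet n with Even i, β ^ i, ∑ i ∈ fibSet n with ¬Even i, β ^ i] := by
  induction n with
  | zero => simp [fibTransfer, fibSet_zero, fibSet_one, filter_insert, filter_singleton]
  | succ n ih =>
    have hsum (p : ℕ → Prop) [DecidablePred p] (hp : ∀ i, p (2 ^ (n + 1) + i) ↔ p i) :
        ∑ i ∈ fibSet (n + 2) with p i, β ^ i =
          ∑ i ∈ fibSet (n + 1) with p i, β ^ i +
            β ^ 2 ^ (n + 1) * ∑ i ∈ fibSet n with p i, β ^ i := by
      simp only [sum_filter, sum_fibSet_add_two, hp, pow_add β, mul_sum, mul_ite, mul_zero]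
    have heven (i : ℕ) : Even (2 ^ (n + 1) + i) ↔ Even i := by
      simp [Nat.even_add, Nat.even_pow]
    rw [fibTransfer, ih, hsum Even heven, hsum (¬Even ·) fun i ↦ not_congr (heven i)]
    simp

theorem trace_fibTransfer [CommSemiring R] (β : R) (n : ℕ) :
    (fibTransfer β (n + 1)).trace = 1 + ∑ i ∈ fibCycSet (n + 1), β ^ i := by
  have hzero : 0 ∉ fibCycSet (n + 1) := by simp [fibCycSet]
  have hdisj : Disjoint {i ∈ fibSet (n + 1) | Even i} {i ∈ fibSet n | ¬Even i} := by
    simp +contextual [disjoint_left]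
  calc (fibTransfer β (n + 1)).trace
      = ∑ i ∈ insert 0 (fibCycSet (n + 1)), β ^ i := by
        rw [insert_zero_fibCycSet, sum_union hdisj, fibTransfer_succ_eq, trace_fin_two_of]
    _ = 1 + ∑ i ∈ fibCycSet (n + 1), β ^ i := by rw [sum_insert hzero, pow_zero]

theorem det_fibTransfer [CommRing R] (β : R) (n : ℕ) :
    (fibTransfer β n).det = (-1) ^ n * β ^ (2 ^ n - 1) := by
  induction n with
  | zero => simp [fibTransfer]
  | succ n ih =>
    have hexp : 2 ^ (n + 1) - 1 = 2 ^ n + (2 ^ n - 1) := by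
      have := Nat.one_le_two_pow (n := n)
      omega
    rw [fibTransfer, det_mul, ih, det_fin_two_of, hexp]
    ring

theorem fibTransfer_mulVec [CommRing R] [CharP R 2] (u : R) (n : ℕ) :
    fibTransfer (u ^ 3 + u) n *ᵥ ![u ^ 2, u] = ![u ^ 2 ^ (n + 1), u ^ 2 ^ n] := by
  induction n with
  | zero => simp [fibTransfer]
  | succ n ih =>
    have hfrob : u ^ 2 ^ (n + 1) + (u ^ 3 + u) ^ 2 ^ n * u ^ 2 ^ n = u ^ 2 ^ (n + 2) := by
      calc u ^ 2 ^ (n + 1) + (u ^ 3 + u) ^ 2 ^ n * u ^ 2 ^ n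
          = (u ^ 2 + (u ^ 3 + u) * u) ^ 2 ^ n := by
            rw [add_pow_char_pow (u ^ 2), mul_pow, ← pow_mul, ← pow_succ']
        _ = (u ^ 4) ^ 2 ^ n := by
            congr 1
            linear_combination u ^ 2 * CharTwo.two_eq_zero (R := R)
        _ = u ^ 2 ^ (n + 2) := by rw [← pow_mul]; ring
    rw [fibTransfer, ← mulVec_mulVec, ih, ← hfrob]
    ext i
    fin_cases i <;> simp [mulVec, dotProduct]

theorem trace_eq_one_add_det_of_mulVec_eq_self [CommRing R] [IsDomain R]
    {M : Matrix (Fin 2) (Fin 2) R} {v : Fin 2 → R} (hv : v ≠ 0) (hM : M *ᵥ v = v) :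
    M.trace = 1 + M.det := by
  have hdet : (M - 1).det = 0 :=
    exists_mulVec_eq_zero_iff.1 ⟨v, hv, by rw [sub_mulVec, hM, one_mulVec, sub_self]⟩
  have hexpand : (M - 1).det = M.det - M.trace + 1 := by
    simp only [det_fin_two, trace_fin_two, Matrix.sub_apply, one_apply_eq, one_apply_ne, ne_eq,
      zero_ne_one, one_ne_zero, not_false_eq_true, sub_zero]
    ring
  linear_combination hexpand - hdet

theorem aeval_cube_add_self_fibCycPoly [CommRing R] [IsDomain R] [Algebra (ZMod 2) R] {u : R}
    {m : ℕ} (hm : m ≠ 0) (hu : u ^ 2 ^ m = u) (h0 : u ^ 3 + u ≠ 0) :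
    aeval (u ^ 3 + u) (fibCycPoly m) = 1 := by
  obtain ⟨n, rfl⟩ := Nat.exists_eq_succ_of_ne_zero hm
  have : CharP R 2 := charP_of_injective_algebraMap (algebraMap (ZMod 2) R).injective 2
  set β := u ^ 3 + u with hβ
  have hu0 : u ≠ 0 := by rintro rfl; simp [hβ] at h0
  have hfix : fibTransfer β (n + 1) *ᵥ ![u ^ 2, u] = ![u ^ 2, u] := by
    rw [fibTransfer_mulVec, pow_succ, pow_mul, hu]
  have hdet : (fibTransfer β (n + 1)).det = 1 := by
    have hβpow : β ^ 2 ^ (n + 1) = β := by rw [hβ, add_pow_char_pow, pow_right_comm, hu]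
    rw [det_fibTransfer, CharTwo.neg_eq, one_pow, one_mul]
    apply mul_right_cancel₀ h0
    rw [← pow_succ, Nat.sub_add_cancel Nat.one_le_two_pow, hβpow, one_mul]
  have htrace := trace_eq_one_add_det_of_mulVec_eq_self (by simp [hu0]) hfix
  rw [trace_fibTransfer, hdet] at htrace
  simpa [fibCycPoly] using add_left_cancel htrace

end TransferMatrix

section Fibers

theorem sum_card_fiber_sq_eq {α β : Type*} [Fintype α] [Fintype β] [DecidableEq α] [DecidableEq β]
    (f : α → β) :
    ∑ b, #{a | f a = b} ^ 2 =
      Fintype.card α + #{p : α × α | f p.1 = f p.2 ∧ p.1 ≠ p.2} := by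
  have hfiber (b : β) : #{a | f a = b} ^ 2 =
      #{p ∈ ({p : α × α | f p.1 = f p.2} : Finset (α × α)) | f p.1 = b} := by
    rw [sq, ← card_product]
    congr 1
    ext ⟨a, a'⟩
    simp only [mem_product, mem_filter]
    grind
  have hdiag : ({p : α × α | f p.1 = f p.2 ∧ p.1 = p.2} : Finset (α × α)) = univ.diag := by
    ext ⟨a, a'⟩
    simp +contextual
  simp_rw [hfiber]
  rw [← card_eq_sum_card_fiberwise (by simp), ← card_filter_add_card_filter_not fun p ↦ p.1 = p.2,
    filter_filter, filter_filter, hdiag, diag_card, card_univ]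

theorem three_mul_card_forall_ne_add_le {α β : Type*} [Fintype α] [Fintype β] [DecidableEq α]
    [DecidableEq β] (f : α → β) (b₀ : β) (hf : ∀ b ≠ b₀, #{a | f a = b} ≠ 2) :
    3 * #{b | ∀ a, f a ≠ b} + 3 * Fintype.card α ≤
      3 * Fintype.card β + #{p : α × α | f p.1 = f p.2 ∧ p.1 ≠ p.2} + 1 := by
  have hsum : Fintype.card α = ∑ b, #{a | f a = b} :=
    card_eq_sum_card_fiberwise (by simp)
  have hpoint (b : β) : 3 * (if ∀ a, f a ≠ b then 1 else 0) + 4 * #{a | f a = b} ≤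
      3 + #{a | f a = b} ^ 2 + if b = b₀ then 1 else 0 := by
    have hempty : (∀ a, f a ≠ b) ↔ #{a | f a = b} = 0 := by
      simp [filter_eq_empty_iff]
    have := hf b
    simp only [hempty]
    generalize #{a | f a = b} = c at *
    obtain h | h := le_or_gt c 2
    · interval_cases c <;> grind
    · rw [if_neg (by omega)]
      exact le_add_right (by nlinarith)
  have := sum_le_sum fun b (_ : b ∈ univ) ↦ hpoint b
  simp only [sum_add_distrib, ← mul_sum, sum_boole, ← hsum, sum_card_fiber_sq_eq, sum_const,
    card_univ, filter_eq', mem_univ, if_true, card_singleton, Nat.cast_id, smul_eq_mul] at this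
  omega

end Fibers

section Cubic

variable {R K : Type*} [Field K]

theorem sq_add_mul_add_sq_add_one_eq_zero [CommRing R] [IsDomain R] {u v : R}
    (h : u ^ 3 + u = v ^ 3 + v) (huv : u ≠ v) :
    u ^ 2 + u * v + v ^ 2 + 1 = 0 := by
  apply mul_left_cancel₀ (sub_ne_zero.2 huv)
  linear_combination h

theorem card_cube_add_self_fiber_ne_two [CommRing R] [IsDomain R] [CharP R 2] [Fintype R]
    [DecidableEq R] {β : R} (hβ : β ≠ 0) :
    #{u : R | u ^ 3 + u = β} ≠ 2 := by
  intro hcard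
  obtain ⟨u, v, huv, hfiber⟩ := card_eq_two.1 hcard
  have hmem (w : R) : w ^ 3 + w = β ↔ w = u ∨ w = v := by
    simpa using Finset.ext_iff.1 hfiber w
  have hu := (hmem u).2 (.inl rfl)
  have hv := (hmem v).2 (.inr rfl)
  have hconic := sq_add_mul_add_sq_add_one_eq_zero (hu.trans hv.symm) huv
  have hsum : (u + v) ^ 3 + (u + v) = β := by
    linear_combination hu + v * hconic + (u ^ 2 * v + u * v ^ 2) * CharTwo.two_eq_zero (R := R)
  obtain h | h := (hmem (u + v)).1 hsum
  · exact hβ (by simpa [add_eq_left.1 h] using hv.symm)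
  · exact hβ (by simpa [add_eq_right.1 h] using hu.symm)

theorem card_cube_add_self_collision_le [CharP K 2] [Fintype K] [DecidableEq K] :
    #{p : K × K | p.1 ^ 3 + p.1 = p.2 ^ 3 + p.2 ∧ p.1 ≠ p.2} ≤
      #{t : K | t ^ 2 + t + 1 ≠ 0} := by
  have hratio {u v : K} (h : u ^ 3 + u = v ^ 3 + v) (huv : u ≠ v) :
      ((u / (u - v)) ^ 2 + u / (u - v) + 1) * (u - v) ^ 2 = 1 := by
    have := sub_ne_zero.2 huv
    field_simp
    linear_combination sq_add_mul_add_sq_add_one_eq_zero h huv +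
      (u ^ 2 - 2 * u * v - 1) * CharTwo.two_eq_zero (R := K)
  apply card_le_card_of_injOn fun p ↦ p.1 / (p.1 - p.2)
  · rintro ⟨u, v⟩ hp
    obtain ⟨h, huv⟩ := (mem_filter_univ _).1 hp
    exact (mem_filter_univ _).2 (left_ne_zero_of_mul_eq_one (hratio h huv))
  · rintro ⟨u, v⟩ hp ⟨u', v'⟩ hp' heq
    obtain ⟨h, huv⟩ := (mem_filter_univ _).1 hp
    obtain ⟨h', huv'⟩ := (mem_filter_univ _).1 hp'
    dsimp only at h huv h' huv' heq
    have hne := left_ne_zero_of_mul_eq_one (hratio h huv)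
    have hsub : u - v = u' - v' := by
      apply CharTwo.sq_inj.1
      apply mul_left_cancel₀ hne
      rw [hratio h huv, heq, hratio h' huv']
    have hu : u = u' := by
      rw [hsub] at heq
      exact (div_left_inj' (sub_ne_zero.2 huv')).1 heq
    rw [hu] at hsub ⊢
    rw [sub_right_inj.1 hsub]

theorem three_mul_card_forall_cube_add_self_ne_le [CharP K 2] [Fintype K] [DecidableEq K] :
    3 * #{β : K | ∀ u, u ^ 3 + u ≠ β} ≤ #{t : K | t ^ 2 + t + 1 ≠ 0} + 1 := by
  have hfibers := three_mul_card_forall_ne_add_le (fun u : K ↦ u ^ 3 + u) 0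
    fun _ ↦ card_cube_add_self_fiber_ne_two
  have hpairs := card_cube_add_self_collision_le (K := K)
  omega

theorem exists_sq_add_self_add_one_eq_zero [Fintype K] (h3 : 3 ∣ Fintype.card K - 1) :
    ∃ t : K, t ^ 2 + t + 1 = 0 := by
  classical
  rw [← Fintype.card_units] at h3
  obtain ⟨w, hw⟩ := exists_prime_orderOf_dvd_card 3 h3
  have hprim : IsPrimitiveRoot (w : K) 3 := IsPrimitiveRoot.coe_units_iff.2 (hw ▸ .orderOf w)
  have hsum : 1 + (w : K) + (w : K) ^ 2 = 0 := by
    simpa [sum_range_succ] using hprim.geom_sum_eq_zero (by norm_num)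
  exact ⟨w, by linear_combination hsum⟩

theorem card_sq_add_self_add_one_ne_zero_add_two_le [CharP K 2] [Fintype K] [DecidableEq K]
    (h3 : 3 ∣ Fintype.card K - 1) :
    #{t : K | t ^ 2 + t + 1 ≠ 0} + 2 ≤ Fintype.card K := by
  obtain ⟨t, ht⟩ := exists_sq_add_self_add_one_eq_zero h3
  have hroots : {t, t + 1} ⊆ ({s : K | s ^ 2 + s + 1 = 0} : Finset K) := by
    have ht' : (t + 1) ^ 2 + (t + 1) + 1 = 0 := by
      linear_combination ht + (t + 1) * CharTwo.two_eq_zero (R := K)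
    simp [insert_subset_iff, ht, ht']
  have htwo := card_le_card hroots
  rw [card_pair (by simp)] at htwo
  have hsplit : #{s : K | s ^ 2 + s + 1 = 0} + #{s : K | s ^ 2 + s + 1 ≠ 0} = Fintype.card K :=
    card_filter_add_card_filter_not _
  omega

end Cubic

theorem card_roots_fibCycPoly_le_general {K : Type*} [Field K] [Finite K] [Algebra (ZMod 2) K]
    {m : ℕ} (hK : Nat.card K = 2 ^ m) :
    (Odd m → Nat.card {β : K // β ≠ 0 ∧ Polynomial.aeval β (fibCycPoly m) = 0} ≤
        (2 ^ m + 1) / 3) ∧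
    (Even m → Nat.card {β : K // β ≠ 0 ∧ Polynomial.aeval β (fibCycPoly m) = 0} ≤
        (2 ^ m - 1) / 3) := by
  classical
  have := Fintype.ofFinite K
  have : CharP K 2 := charP_of_injective_algebraMap (algebraMap (ZMod 2) K).injective 2
  rw [Nat.card_eq_fintype_card] at hK
  have hm : m ≠ 0 := by
    rintro rfl
    exact (Fintype.one_lt_card (α := K)).ne' hK
  have hroots : Nat.card {β : K // β ≠ 0 ∧ Polynomial.aeval β (fibCycPoly m) = 0} ≤
      #{β : K | ∀ u, u ^ 3 + u ≠ β} := by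
    rw [Nat.card_eq_fintype_card, Fintype.card_subtype]
    apply card_le_card
    apply monotone_filter_right
    rintro _ _ ⟨h0, hroot⟩ u rfl
    have hu : u ^ 2 ^ m = u := hK ▸ FiniteField.pow_card u
    rw [aeval_cube_add_self_fibCycPoly hm hu h0] at hroot
    exact one_ne_zero hroot
  have hcount := three_mul_card_forall_cube_add_self_ne_le (K := K)
  refine ⟨fun _ ↦ ?_, fun hm ↦ ?_⟩
  · have := card_filter_le (univ : Finset K) fun t ↦ t ^ 2 + t + 1 ≠ 0
    rw [card_univ, hK] at this
    omega
  · have h3 : 3 ∣ 2 ^ m - 1 := by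
      obtain ⟨k, rfl⟩ := hm
      simpa [← two_mul, pow_mul] using Nat.sub_dvd_pow_sub_pow 4 1 k
    have := card_sq_add_self_add_one_ne_zero_add_two_le (K := K) (hK ▸ h3)
    omega

theorem card_roots_fibCycPoly_le (m : ℕ) (hm : 4 ≤ m) :
    (Odd m → Nat.card {β : GaloisField 2 m // β ≠ 0 ∧ Polynomial.aeval β (fibCycPoly m) = 0} ≤
        (2 ^ m + 1) / 3) ∧
    (Even m → Nat.card {β : GaloisField 2 m // β ≠ 0 ∧ Polynomial.aeval β (fibCycPoly m) = 0} ≤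
        (2 ^ m - 1) / 3) := card_roots_fibCycPoly_le_general (GaloisField.card 2 m (by omega))
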